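/- Let T ∈ (0,∞) and let (s,u) be a solution of problem (P) on (0,T] with initial data (s₀,φ) ∈ W. Assume there exists M > 0 such that 0 ≤ φ(x) ≤ M(s₀ − x) for all x ∈ [0,s₀] and 0 ≤ u(t,0)^p ≤ M for all t ∈ (0,T]. Then 0 ≤ u(t,x) ≤ M(s(t) − x) for all t ∈ [0,T] and x ∈ [0,s(t)]; in particular, s'(t) = −∂_x u(t,s(t)) ≤ M for all t ∈ (0,T]. -/

import Mathlib

open Set MeasureTheory Filter Topology Real
open scoped ENNReal

noncomputable section

/-- `(s₀, φ)` belongs to the class `W`: `s₀ ∈ (0,∞)`, `φ` is Lipschitz on `[0,s₀]`,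
not identically zero, nonnegative there, and vanishes at `s₀`. -/
def memW (s₀ : ℝ) (φ : ℝ → ℝ) : Prop :=
  0 < s₀ ∧ (∃ K : NNReal, LipschitzOnWith K φ (Icc 0 s₀)) ∧
    (∃ x ∈ Icc 0 s₀, φ x ≠ 0) ∧ (∀ x ∈ Icc 0 s₀, 0 ≤ φ x) ∧ φ s₀ = 0

/-- `(s,u)` is a solution of the one-phase Stefan problem (P) on `(0,T]` (finite `T`)
with exponent `p` and initial data `(s₀,φ)`. -/
structure IsSolOn (p s₀ : ℝ) (φ : ℝ → ℝ) (T : ℝ) (s : ℝ → ℝ) (u : ℝ → ℝ → ℝ) : Prop where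
  T_pos : 0 < T
  s_cont : ContinuousOn s (Icc 0 T)
  s_diff : ∀ t ∈ Ioc 0 T, DifferentiableAt ℝ s t
  s_deriv_cont : ContinuousOn (deriv s) (Ioc 0 T)
  s_pos : ∀ t ∈ Icc 0 T, 0 < s t
  ut_diff : ∀ t ∈ Ioc 0 T, ∀ x ∈ Ioo 0 (s t), DifferentiableAt ℝ (fun τ => u τ x) t
  ux_diff : ∀ t ∈ Ioc 0 T, ∀ x ∈ Ioo 0 (s t), DifferentiableAt ℝ (u t) x
  uxx_diff : ∀ t ∈ Ioc 0 T, ∀ x ∈ Ioo 0 (s t), DifferentiableAt ℝ (deriv (u t)) x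
  ut_cont : ContinuousOn (fun q : ℝ × ℝ => deriv (fun τ => u τ q.2) q.1)
      {q : ℝ × ℝ | q.1 ∈ Ioc 0 T ∧ q.2 ∈ Ioo 0 (s q.1)}
  uxx_cont : ContinuousOn (fun q : ℝ × ℝ => deriv (deriv (u q.1)) q.2)
      {q : ℝ × ℝ | q.1 ∈ Ioc 0 T ∧ q.2 ∈ Ioo 0 (s q.1)}
  ux_cont : ContinuousOn (fun q : ℝ × ℝ => deriv (u q.1) q.2)
      {q : ℝ × ℝ | q.1 ∈ Ioc 0 T ∧ q.2 ∈ Icc 0 (s q.1)}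
  u_cont : ContinuousOn (fun q : ℝ × ℝ => u q.1 q.2)
      {q : ℝ × ℝ | q.1 ∈ Icc 0 T ∧ q.2 ∈ Icc 0 (s q.1)}
  u_nonneg : ∀ t ∈ Icc 0 T, ∀ x ∈ Icc 0 (s t), 0 ≤ u t x
  heat : ∀ t ∈ Ioc 0 T, ∀ x ∈ Ioo 0 (s t),
      deriv (fun τ => u τ x) t = deriv (deriv (u t)) x
  bc_zero : ∀ t ∈ Ioc 0 T, -deriv (u t) 0 = u t 0 ^ p
  bc_free : ∀ t ∈ Ioc 0 T, u t (s t) = 0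
  stefan : ∀ t ∈ Ioc 0 T, deriv s t = -deriv (u t) (s t)
  init : ∀ x ∈ Icc 0 s₀, u 0 x = φ x
  init_s : s 0 = s₀

/-- `(s,u)` is a global-in-time solution of problem (P). -/
def IsGlobalSol (p s₀ : ℝ) (φ : ℝ → ℝ) (s : ℝ → ℝ) (u : ℝ → ℝ → ℝ) : Prop :=
  ∀ T : ℝ, 0 < T → IsSolOn p s₀ φ T s u

/-- `Tm ∈ (0,∞]` is the maximal existence time of the solution `(s,u)` of (P) with
initial data `(s₀,φ)`: the solution exists on `(0,T]` for every `T < Tm`, and for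
`T > Tm` problem (P) admits no solution on `(0,T]`. -/
def IsMaxSol (p s₀ : ℝ) (φ : ℝ → ℝ) (Tm : ℝ≥0∞) (s : ℝ → ℝ) (u : ℝ → ℝ → ℝ) : Prop :=
  0 < Tm ∧
    (∀ T : ℝ, 0 < T → ENNReal.ofReal T < Tm → IsSolOn p s₀ φ T s u) ∧
    (∀ T : ℝ, Tm < ENNReal.ofReal T → ¬∃ σ v, IsSolOn p s₀ φ T σ v)

/-- The sup norm `‖u(t)‖_{L^∞(0,s(t))}`. -/
def supNorm (s : ℝ → ℝ) (u : ℝ → ℝ → ℝ) (t : ℝ) : ℝ :=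
  sSup (u t '' Ioo 0 (s t))

/-- The `L¹` norm `‖u(t)‖_{L¹(0,s(t))}` of the nonnegative function `u(t,·)`. -/
def L1Norm (s : ℝ → ℝ) (u : ℝ → ℝ → ℝ) (t : ℝ) : ℝ :=
  ∫ x in (0:ℝ)..(s t), u t x

/-- The energy `E(s(t),u(t))`. -/
def energy (p : ℝ) (s : ℝ → ℝ) (u : ℝ → ℝ → ℝ) (t : ℝ) : ℝ :=
  1 / 2 * (∫ x in (0:ℝ)..(s t), (deriv (u t) x) ^ 2) - u t 0 ^ (p + 1) / (p + 1)

/-!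
The barrier `M (s(t) - x)` dominates `u`. Since `u ≥ 0` vanishes on the free boundary, the Stefan
condition gives `s' ≥ 0`, so the barrier is a supersolution of the heat equation; it dominates `u`
initially, equals `u` on `x = s(t)`, and its flux `M` at `x = 0` dominates `u(t,0)^p`. The weak
minimum principle for the difference gives the bound. It holds with equality at `x = s(t)`, so
comparing slopes there yields `s' ≤ M`.
-/

lemma mul_sub_nonneg_of_isLocalMinOn {f : ℝ → ℝ} {f' x y : ℝ} {S : Set ℝ} (hS : Convex ℝ S)
    (hx : x ∈ S) (hy : y ∈ S) (hmin : IsLocalMinOn f S x) (hf : HasDerivWithinAt f f' S x) :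
    0 ≤ f' * (y - x) := by
  have h := hmin.hasFDerivWithinAt_nonneg hf.hasFDerivWithinAt
    (sub_mem_posTangentConeAt_of_segment_subset (hS.segment_subset hx hy))
  simpa [mul_comm] using h

lemma second_deriv_nonneg_of_isLocalMin {f f' : ℝ → ℝ} {f'' x : ℝ} (hmin : IsLocalMin f x)
    (hf : ∀ᶠ y in 𝓝 x, HasDerivAt f (f' y) y) (hf' : HasDerivAt f' f'' x) : 0 ≤ f'' := by
  have hderiv : deriv f =ᶠ[𝓝 x] f' := hf.mono fun y hy => hy.deriv
  have hderiv2 : deriv (deriv f) x = f'' := hderiv.deriv_eq.trans hf'.deriv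
  by_contra! hneg
  have hmax : IsLocalMax f x := isLocalMax_of_deriv_deriv_neg (hderiv2.trans_lt hneg)
    hmin.deriv_eq_zero hf.self_of_nhds.continuousAt
  have hconst : f =ᶠ[𝓝 x] fun _ => f x :=
    (hmin.and hmax).mono fun y hy => le_antisymm hy.2 hy.1
  have hzero : deriv (deriv f) x = 0 := by simpa using hconst.deriv.deriv_eq
  exact hneg.ne (hderiv2.symm.trans hzero)

lemma hasDerivWithinAt_Icc_of_continuousOn_deriv {E : Type*} [NormedAddCommGroup E]
    [NormedSpace ℝ E] {f : ℝ → E} {a b x : ℝ} (hab : a < b)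
    (hf : ContinuousOn f (Icc a b)) (hdiff : ∀ y ∈ Ioo a b, DifferentiableAt ℝ f y)
    (hderiv : ContinuousOn (deriv f) (Icc a b)) (hx : x ∈ Icc a b) :
    HasDerivWithinAt f (deriv f x) (Icc a b) x := by
  have hlim : Tendsto (fun y => fderiv ℝ f y) (𝓝[Ioo a b] x)
      (𝓝 (ContinuousLinearMap.toSpanSingleton ℝ (deriv f x))) := by
    simp only [← toSpanSingleton_deriv]
    exact ((ContinuousLinearMap.toSpanSingletonCLE (𝕜 := ℝ) (E := E)).continuous.tendsto _).comp
      ((hderiv x hx).mono Ioo_subset_Icc_self)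
  rw [← closure_Ioo hab.ne]
  exact hasFDerivWithinAt_closure_of_tendsto_fderiv
    (fun y hy => (hdiff y hy).differentiableWithinAt) (convex_Ioo a b) isOpen_Ioo
    (fun y hy => (hf y (closure_Ioo hab.ne ▸ hy)).mono Ioo_subset_Icc_self) hlim

/-- The closed, possibly non-cylindrical, space-time region `a(t) ≤ x ≤ b(t)`, `t₀ ≤ t ≤ t₁`, as a
set of pairs `(t, x)`. -/
def spaceTimeRegion (a b : ℝ → ℝ) (t₀ t₁ : ℝ) : Set (ℝ × ℝ) :=
  {q | q.1 ∈ Icc t₀ t₁ ∧ q.2 ∈ Icc (a q.1) (b q.1)}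

lemma isCompact_spaceTimeRegion {a b : ℝ → ℝ} {t₀ t₁ : ℝ} (ha : ContinuousOn a (Icc t₀ t₁))
    (hb : ContinuousOn b (Icc t₀ t₁)) : IsCompact (spaceTimeRegion a b t₀ t₁) := by
  obtain ⟨A, hA⟩ := isCompact_Icc.bddBelow_image ha
  obtain ⟨B, hB⟩ := isCompact_Icc.bddAbove_image hb
  have hstrip : IsClosed {q : ℝ × ℝ | q.1 ∈ Icc t₀ t₁} := isClosed_Icc.preimage continuous_fst
  have hclosed : IsClosed (spaceTimeRegion a b t₀ t₁) := by
    convert (hstrip.isClosed_le (ha.comp continuousOn_fst fun _ hq => hq) continuousOn_snd).inter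
      (hstrip.isClosed_le continuousOn_snd (hb.comp continuousOn_fst fun _ hq => hq)) using 1
    ext q
    exact and_and_left
  have hbox : IsCompact (Icc t₀ t₁ ×ˢ Icc A B) := isCompact_Icc.prod isCompact_Icc
  refine hbox.of_isClosed_subset hclosed fun q hq => ⟨hq.1, ?_, ?_⟩
  · exact (hA (mem_image_of_mem a hq.1)).trans hq.2.1
  · exact hq.2.2.trans (hB (mem_image_of_mem b hq.1))

lemma isMinOn_slice_spaceTimeRegion {a b : ℝ → ℝ} {t₀ t₁ t x : ℝ} {v : ℝ → ℝ → ℝ}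
    (hmin : IsMinOn (fun q : ℝ × ℝ => v q.1 q.2) (spaceTimeRegion a b t₀ t₁) (t, x))
    (ht : t ∈ Icc t₀ t₁) : IsMinOn (v t) (Icc (a t) (b t)) x :=
  fun y hy => hmin (a := (t, y)) ⟨ht, hy⟩

/-- Regularity of `v` on `spaceTimeRegion a b t₀ t₁` needed for the minimum principle: `v` is
continuous and `vt`, `vx`, `vxx` are its derivatives. The time derivative is taken from the left, so
that it makes sense at the final time, and `vx` extends to the left boundary `x = a(t)`, where a
Neumann condition is imposed. -/
structure HasParabolicDerivs (a b : ℝ → ℝ) (t₀ t₁ : ℝ) (v vt vx vxx : ℝ → ℝ → ℝ) : Prop where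
  continuousOn : ContinuousOn (fun q : ℝ × ℝ => v q.1 q.2) (spaceTimeRegion a b t₀ t₁)
  time : ∀ t ∈ Ioc t₀ t₁, ∀ x ∈ Ioo (a t) (b t),
    HasDerivWithinAt (fun τ => v τ x) (vt t x) (Iic t) t
  space : ∀ t ∈ Ioc t₀ t₁, ∀ x ∈ Ico (a t) (b t),
    HasDerivWithinAt (v t) (vx t x) (Icc (a t) (b t)) x
  space_space : ∀ t ∈ Ioc t₀ t₁, ∀ x ∈ Ioo (a t) (b t), HasDerivAt (vx t) (vxx t x) x

namespace HasParabolicDerivs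

variable {a b : ℝ → ℝ} {t₀ t₁ : ℝ} {v vt vx vxx w wt wx wxx : ℝ → ℝ → ℝ}

lemma add (hv : HasParabolicDerivs a b t₀ t₁ v vt vx vxx)
    (hw : HasParabolicDerivs a b t₀ t₁ w wt wx wxx) :
    HasParabolicDerivs a b t₀ t₁ (fun t x => v t x + w t x) (fun t x => vt t x + wt t x)
      (fun t x => vx t x + wx t x) (fun t x => vxx t x + wxx t x) where
  continuousOn := hv.continuousOn.add hw.continuousOn
  time t ht x hx := (hv.time t ht x hx).add (hw.time t ht x hx)
  space t ht x hx := (hv.space t ht x hx).add (hw.space t ht x hx)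
  space_space t ht x hx := (hv.space_space t ht x hx).add (hw.space_space t ht x hx)

lemma sub (hv : HasParabolicDerivs a b t₀ t₁ v vt vx vxx)
    (hw : HasParabolicDerivs a b t₀ t₁ w wt wx wxx) :
    HasParabolicDerivs a b t₀ t₁ (fun t x => v t x - w t x) (fun t x => vt t x - wt t x)
      (fun t x => vx t x - wx t x) (fun t x => vxx t x - wxx t x) where
  continuousOn := hv.continuousOn.sub hw.continuousOn
  time t ht x hx := (hv.time t ht x hx).sub (hw.time t ht x hx)
  space t ht x hx := (hv.space t ht x hx).sub (hw.space t ht x hx)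
  space_space t ht x hx := (hv.space_space t ht x hx).sub (hw.space_space t ht x hx)

lemma const_mul_sub {g g' : ℝ → ℝ} (a b : ℝ → ℝ) (c : ℝ) (hg : ContinuousOn g (Icc t₀ t₁))
    (hg' : ∀ t ∈ Ioc t₀ t₁, HasDerivWithinAt g (g' t) (Iic t) t) :
    HasParabolicDerivs a b t₀ t₁ (fun t x => c * (g t - x)) (fun t _ => c * g' t)
      (fun _ _ => -c) (fun _ _ => 0) where
  continuousOn := continuousOn_const.mul
    ((hg.comp continuousOn_fst fun _ hq => hq.1).sub continuousOn_snd)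
  time t ht x _ := ((hg' t ht).sub_const x).const_mul c
  space t _ x _ := by simpa using ((hasDerivWithinAt_id x _).const_sub (g t)).const_mul c
  space_space _ _ x _ := hasDerivAt_const x (-c)

lemma time_nonpos_of_isMinOn (hv : HasParabolicDerivs a b t₀ t₁ v vt vx vxx)
    (ha : ContinuousOn a (Icc t₀ t₁)) (hb : ContinuousOn b (Icc t₀ t₁)) {t x : ℝ}
    (hmin : IsMinOn (fun q : ℝ × ℝ => v q.1 q.2) (spaceTimeRegion a b t₀ t₁) (t, x))
    (ht : t ∈ Ioc t₀ t₁) (hx : x ∈ Ioo (a t) (b t)) : vt t x ≤ 0 := by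
  have hmem : Icc t₀ t₁ ∈ 𝓝[≤] t := mem_of_superset (Ioc_mem_nhdsLE ht.1)
    ((Ioc_subset_Ioc_right ht.2).trans Ioc_subset_Icc_self)
  have hlocal : IsLocalMinOn (fun τ => v τ x) (Iic t) t := by
    have ha_le := (ha t (Ioc_subset_Icc_self ht)).mono_of_mem_nhdsWithin hmem
    have hb_le := (hb t (Ioc_subset_Icc_self ht)).mono_of_mem_nhdsWithin hmem
    filter_upwards [hmem, ha_le.eventually_lt_const hx.1, hb_le.eventually_const_lt hx.2]
      with τ hτ haτ hbτ
    exact hmin (a := (τ, x)) ⟨hτ, haτ.le, hbτ.le⟩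
  have hslope := mul_sub_nonneg_of_isLocalMinOn (convex_Iic t) self_mem_Iic
    (mem_Iic.2 (sub_one_lt t).le) hlocal (hv.time t ht x hx)
  linarith

lemma space_space_nonneg_of_isMinOn (hv : HasParabolicDerivs a b t₀ t₁ v vt vx vxx) {t x : ℝ}
    (hmin : IsMinOn (fun q : ℝ × ℝ => v q.1 q.2) (spaceTimeRegion a b t₀ t₁) (t, x))
    (ht : t ∈ Ioc t₀ t₁) (hx : x ∈ Ioo (a t) (b t)) : 0 ≤ vxx t x := by
  have hslice := isMinOn_slice_spaceTimeRegion hmin (Ioc_subset_Icc_self ht)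
  refine second_deriv_nonneg_of_isLocalMin (hslice.isLocalMin (Icc_mem_nhds hx.1 hx.2)) ?_
    (hv.space_space t ht x hx)
  filter_upwards [Ioo_mem_nhds hx.1 hx.2] with y hy
  exact (hv.space t ht y (Ioo_subset_Ico_self hy)).hasDerivAt (Icc_mem_nhds hy.1 hy.2)

lemma space_nonneg_of_isMinOn_left (hv : HasParabolicDerivs a b t₀ t₁ v vt vx vxx) {t : ℝ}
    (hmin : IsMinOn (fun q : ℝ × ℝ => v q.1 q.2) (spaceTimeRegion a b t₀ t₁) (t, a t))
    (ht : t ∈ Ioc t₀ t₁) (hab : a t < b t) : 0 ≤ vx t (a t) := by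
  have hslice := isMinOn_slice_spaceTimeRegion hmin (Ioc_subset_Icc_self ht)
  have hslope := mul_sub_nonneg_of_isLocalMinOn (convex_Icc _ _) (left_mem_Icc.2 hab.le)
    (right_mem_Icc.2 hab.le) hslice.localize (hv.space t ht _ (left_mem_Ico.2 hab))
  exact nonneg_of_mul_nonneg_left hslope (sub_pos.2 hab)

theorem nonneg_of_strict_supersolution (hv : HasParabolicDerivs a b t₀ t₁ v vt vx vxx)
    (ha : ContinuousOn a (Icc t₀ t₁)) (hb : ContinuousOn b (Icc t₀ t₁))
    (hheat : ∀ t ∈ Ioc t₀ t₁, ∀ x ∈ Ioo (a t) (b t), vxx t x < vt t x)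
    (hleft : ∀ t ∈ Ioc t₀ t₁, vx t (a t) < 0) (hright : ∀ t ∈ Ioc t₀ t₁, 0 ≤ v t (b t))
    (hinit : ∀ x ∈ Icc (a t₀) (b t₀), 0 ≤ v t₀ x) :
    ∀ t ∈ Icc t₀ t₁, ∀ x ∈ Icc (a t) (b t), 0 ≤ v t x := by
  intro t' ht' x' hx'
  obtain ⟨⟨t, x⟩, ⟨ht, hx⟩, hmin⟩ := (isCompact_spaceTimeRegion ha hb).exists_isMinOn
    ⟨(t', x'), ht', hx'⟩ hv.continuousOn
  change t ∈ Icc t₀ t₁ at ht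
  change x ∈ Icc (a t) (b t) at hx
  suffices 0 ≤ v t x from this.trans (hmin (a := (t', x')) ⟨ht', hx'⟩)
  rcases ht.1.eq_or_lt with rfl | htpos
  · exact hinit x hx
  have htIoc : t ∈ Ioc t₀ t₁ := ⟨htpos, ht.2⟩
  rcases hx.2.eq_or_lt with rfl | hxb
  · exact hright t htIoc
  rcases hx.1.eq_or_lt with rfl | hax
  · exact absurd (hv.space_nonneg_of_isMinOn_left hmin htIoc hxb) (hleft t htIoc).not_ge
  · have htime := hv.time_nonpos_of_isMinOn ha hb hmin htIoc ⟨hax, hxb⟩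
    have hspace := hv.space_space_nonneg_of_isMinOn hmin htIoc ⟨hax, hxb⟩
    exact absurd (htime.trans hspace) (hheat t htIoc x ⟨hax, hxb⟩).not_ge

theorem nonneg_of_supersolution (hv : HasParabolicDerivs a b t₀ t₁ v vt vx vxx)
    (ha : ContinuousOn a (Icc t₀ t₁)) (hb : ContinuousOn b (Icc t₀ t₁))
    (hheat : ∀ t ∈ Ioc t₀ t₁, ∀ x ∈ Ioo (a t) (b t), vxx t x ≤ vt t x)
    (hleft : ∀ t ∈ Ioc t₀ t₁, vx t (a t) ≤ 0) (hright : ∀ t ∈ Ioc t₀ t₁, 0 ≤ v t (b t))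
    (hinit : ∀ x ∈ Icc (a t₀) (b t₀), 0 ≤ v t₀ x) :
    ∀ t ∈ Icc t₀ t₁, ∀ x ∈ Icc (a t) (b t), 0 ≤ v t x := by
  intro t ht x hx
  obtain ⟨B, hB⟩ := isCompact_Icc.bddAbove_image hb
  have hbB : ∀ τ ∈ Icc t₀ t₁, b τ ≤ B := fun τ hτ => hB (mem_image_of_mem b hτ)
  -- Adding `ε (τ - t₀ + B - y)`, nonnegative on the region, makes both inequalities strict.
  have hperturbed : ∀ ε > 0, 0 ≤ v t x + ε * (t - t₀ + B - x) := by
    intro ε hε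
    have hpenalty := const_mul_sub a b ε (t₀ := t₀) (t₁ := t₁) (g := fun τ => τ - t₀ + B)
      (by fun_prop) fun τ _ => ((hasDerivWithinAt_id τ (Iic τ)).sub_const t₀).add_const B
    refine (hv.add hpenalty).nonneg_of_strict_supersolution ha hb ?_ ?_ ?_ ?_ t ht x hx
    · intro τ hτ y hy
      linarith [hheat τ hτ y hy]
    · intro τ hτ
      linarith [hleft τ hτ]
    · intro τ hτ
      have := hbB τ (Ioc_subset_Icc_self hτ)
      exact add_nonneg (hright τ hτ) (mul_nonneg hε.le (by linarith [hτ.1]))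
    · intro y hy
      have := hbB t₀ (left_mem_Icc.2 (ht.1.trans ht.2))
      exact add_nonneg (hinit y hy) (mul_nonneg hε.le (by linarith [hy.2]))
  have hlim : Tendsto (fun ε => v t x + ε * (t - t₀ + B - x)) (𝓝[>] 0) (𝓝 (v t x)) :=
    ((by fun_prop : Continuous fun ε => v t x + ε * (t - t₀ + B - x)).tendsto' 0 _
      (by simp)).mono_left nhdsWithin_le_nhds
  exact ge_of_tendsto hlim (eventually_mem_nhdsWithin.mono hperturbed)

end HasParabolicDerivs

namespace IsSolOn

variable {p s₀ T M t : ℝ} {φ s : ℝ → ℝ} {u : ℝ → ℝ → ℝ}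

lemma hasDerivWithinAt_space (h : IsSolOn p s₀ φ T s u) (ht : t ∈ Ioc 0 T) {x : ℝ}
    (hx : x ∈ Icc 0 (s t)) : HasDerivWithinAt (u t) (deriv (u t) x) (Icc 0 (s t)) x :=
  hasDerivWithinAt_Icc_of_continuousOn_deriv (h.s_pos t (Ioc_subset_Icc_self ht))
    (h.u_cont.comp (f := fun y => (t, y)) (by fun_prop) fun _ hy => ⟨Ioc_subset_Icc_self ht, hy⟩)
    (h.ux_diff t ht)
    (h.ux_cont.comp (f := fun y => (t, y)) (by fun_prop) fun _ hy => ⟨ht, hy⟩) hx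

lemma hasParabolicDerivs (h : IsSolOn p s₀ φ T s u) :
    HasParabolicDerivs (fun _ => 0) s 0 T u (fun t x => deriv (fun τ => u τ x) t)
      (fun t => deriv (u t)) (fun t => deriv (deriv (u t))) where
  continuousOn := h.u_cont
  time t ht x hx := (h.ut_diff t ht x hx).hasDerivAt.hasDerivWithinAt
  space _ ht _ hx := h.hasDerivWithinAt_space ht (Ico_subset_Icc_self hx)
  space_space t ht x hx := (h.uxx_diff t ht x hx).hasDerivAt

lemma deriv_s_nonneg (h : IsSolOn p s₀ φ T s u) (ht : t ∈ Ioc 0 T) : 0 ≤ deriv s t := by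
  have hs := h.s_pos t (Ioc_subset_Icc_self ht)
  have hmin : IsMinOn (u t) (Icc 0 (s t)) (s t) := fun x hx =>
    (h.bc_free t ht).trans_le (h.u_nonneg t (Ioc_subset_Icc_self ht) x hx)
  have hslope := mul_sub_nonneg_of_isLocalMinOn (convex_Icc _ _) (right_mem_Icc.2 hs.le)
    (left_mem_Icc.2 hs.le) hmin.localize (h.hasDerivWithinAt_space ht (right_mem_Icc.2 hs.le))
  rw [zero_sub, mul_neg, ← neg_mul, ← h.stefan t ht] at hslope
  exact nonneg_of_mul_nonneg_left hslope hs

lemma barrier_slope_nonneg (h : IsSolOn p s₀ φ T s u)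
    (hφ : ∀ x ∈ Icc 0 s₀, φ x ≤ M * (s₀ - x)) : 0 ≤ M := by
  have h0 : (0 : ℝ) ∈ Icc 0 T := left_mem_Icc.2 h.T_pos.le
  have hs₀ : 0 < s₀ := h.init_s ▸ h.s_pos 0 h0
  have hmem : (0 : ℝ) ∈ Icc 0 s₀ := left_mem_Icc.2 hs₀.le
  have hle : 0 ≤ M * (s₀ - 0) :=
    (h.u_nonneg 0 h0 0 (h.init_s.symm ▸ hmem)).trans (h.init 0 hmem ▸ hφ 0 hmem)
  exact nonneg_of_mul_nonneg_left hle (by simpa using hs₀)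

lemma le_barrier (h : IsSolOn p s₀ φ T s u) (hφ : ∀ x ∈ Icc 0 s₀, φ x ≤ M * (s₀ - x))
    (hu0 : ∀ t ∈ Ioc 0 T, u t 0 ^ p ≤ M) :
    ∀ t ∈ Icc 0 T, ∀ x ∈ Icc 0 (s t), u t x ≤ M * (s t - x) := by
  have hbarrier := HasParabolicDerivs.const_mul_sub (fun _ => 0) s M h.s_cont
    fun τ hτ => (h.s_diff τ hτ).hasDerivAt.hasDerivWithinAt
  have hnonneg := (hbarrier.sub h.hasParabolicDerivs).nonneg_of_supersolution
    continuousOn_const h.s_cont ?heat ?left ?right ?init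
  case heat =>
    intro t ht x hx
    have := mul_nonneg (h.barrier_slope_nonneg hφ) (h.deriv_s_nonneg ht)
    linarith [h.heat t ht x hx]
  case left =>
    intro t ht
    linarith [h.bc_zero t ht, hu0 t ht]
  case right =>
    intro t ht
    simp [h.bc_free t ht]
  case init =>
    intro x hx
    rw [h.init_s] at hx ⊢
    rw [h.init x hx]
    exact sub_nonneg.2 (hφ x hx)
  exact fun t ht x hx => sub_nonneg.1 (hnonneg t ht x hx)

lemma deriv_s_le_of_le_barrier (h : IsSolOn p s₀ φ T s u) (ht : t ∈ Ioc 0 T)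
    (hle : ∀ x ∈ Icc 0 (s t), u t x ≤ M * (s t - x)) : deriv s t ≤ M := by
  have hs := h.s_pos t (Ioc_subset_Icc_self ht)
  have hmin : IsMinOn (fun x => M * (s t - x) - u t x) (Icc 0 (s t)) (s t) := fun x hx => by
    simpa [h.bc_free t ht] using hle x hx
  have hderiv := (((hasDerivWithinAt_id (s t) (Icc 0 (s t))).const_sub (s t)).const_mul M).sub
    (h.hasDerivWithinAt_space ht (right_mem_Icc.2 hs.le))
  have hslope := mul_sub_nonneg_of_isLocalMinOn (convex_Icc _ _) (right_mem_Icc.2 hs.le)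
    (left_mem_Icc.2 hs.le) hmin.localize hderiv
  have hfactor : 0 ≤ (M - deriv s t) * s t := by
    rw [h.stefan t ht]
    linarith
  exact sub_nonneg.1 (nonneg_of_mul_nonneg_left hfactor hs)

end IsSolOn

theorem stmt_6_general {p s₀ T M : ℝ} {φ s : ℝ → ℝ} {u : ℝ → ℝ → ℝ}
    (hsol : IsSolOn p s₀ φ T s u) (hφ : ∀ x ∈ Icc 0 s₀, φ x ≤ M * (s₀ - x))
    (hu0 : ∀ t ∈ Ioc 0 T, u t 0 ^ p ≤ M) :
    (∀ t ∈ Icc 0 T, ∀ x ∈ Icc 0 (s t), 0 ≤ u t x ∧ u t x ≤ M * (s t - x)) ∧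
    ∀ t ∈ Ioc 0 T, deriv s t = -deriv (u t) (s t) ∧ deriv s t ≤ M := by
  have hle := hsol.le_barrier hφ hu0
  exact ⟨fun t ht x hx => ⟨hsol.u_nonneg t ht x hx, hle t ht x hx⟩, fun t ht =>
    ⟨hsol.stefan t ht, hsol.deriv_s_le_of_le_barrier ht (hle t (Ioc_subset_Icc_self ht))⟩⟩

/-- Lemma 2.2: pointwise bound `u(t,x) ≤ M (s(t) - x)`. -/
theorem stmt_6 (p : ℝ) (hp : 1 < p) (T : ℝ) (hT : 0 < T) (s₀ : ℝ) (φ : ℝ → ℝ)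
    (hW : memW s₀ φ) (s : ℝ → ℝ) (u : ℝ → ℝ → ℝ) (hsol : IsSolOn p s₀ φ T s u)
    (M : ℝ) (hM : 0 < M)
    (hφ : ∀ x ∈ Icc 0 s₀, 0 ≤ φ x ∧ φ x ≤ M * (s₀ - x))
    (hu0 : ∀ t ∈ Ioc 0 T, 0 ≤ u t 0 ^ p ∧ u t 0 ^ p ≤ M) :
    (∀ t ∈ Icc 0 T, ∀ x ∈ Icc 0 (s t), 0 ≤ u t x ∧ u t x ≤ M * (s t - x)) ∧
    ∀ t ∈ Ioc 0 T, deriv s t = -deriv (u t) (s t) ∧ deriv s t ≤ M := by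
  exact stmt_6_general hsol (fun x hx => (hφ x hx).2) fun t ht => (hu0 t ht).2
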